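/- arXiv:2506.02407 — 3 statements merged into one kernel-verified Lean document; each statement's English description precedes it below -/
import Mathlib

section
/- Let h, λ > 0 and w ∈ ℝ, and let S(y) = max(0, 1 − |y|/h)/h be the tent shape function of spacing h. Fix integers i, l, j with i < l and real numbers x_old, x_new, y satisfying i·h ≤ x_old < (i+1)·h, l·h ≤ x_new < (l+1)·h, and j·h ≤ y < (j+1)·h. Let n_bg : ℤ × ℤ → ℝ and n0 ∈ ℝ, and define the densities n_old(k,r) = n_bg(k,r) + w·S(x_old − k·h)·S(y − r·h) and n_new(k,r) = n_bg(k,r) + w·S(x_new − k·h)·S(y − r·h). Suppose (Ex, Ey) satisfies the discrete Gauss's law with density n_old, background n0, and parameter λ. Define an updated field Ex* by, for each s ∈ {j, j+1}: Ex*(i,s) = Ex(i,s) + (h·w/λ²)·S(x_old − i·h)·S(y − s·h); Ex*(r,s) = Ex(r,s) + (h·w/λ²)·[S(x_old − i·h) + S(x_old − (i+1)·h) − S(x_new − (i+1)·h)]·S(y − s·h) for every integer r with i+1 ≤ r ≤ l−1; Ex*(l,s) = Ex(l,s) + (h·w/λ²)·S(x_new − (l+1)·h)·S(y − s·h); and Ex*(k,r)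 = Ex(k,r) for all other index pairs (k,r). Then (Ex*, Ey) satisfies the discrete Gauss's law with density n_new, background n0, and parameter λ at every node of ℤ × ℤ. -/
/-- The tent (linear B-spline) shape function of spacing `h`. -/
noncomputable def tent (h : ℝ) (y : ℝ) : ℝ := max 0 (1 - |y| / h) / h

/-- Discrete divergence of a staggered electric field `(Ex, Ey)` on the
uniform grid of spacing `h`, at node `(k, r)`. -/
noncomputable def divh (h : ℝ) (Ex Ey : ℤ × ℤ → ℝ) (p : ℤ × ℤ) : ℝ :=
  (Ex p - Ex (p.1 - 1, p.2)) / h + (Ey p - Ey (p.1, p.2 - 1)) / h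

/-!
Let `P x k` be the sum of the tent values `tent h (x - m * h)` over all nodes `m ≤ k`. The three
formulas of the local update are a single one: on the edge from node `k` to node `k + 1` of row `s`,
the field changes by `h * w / lam ^ 2 * (P xold k - P xnew k) * tent h (y - s * h)`, which is
proportional to the charge that crosses this edge. Telescoping `P` turns the divergence of this
change into the change of the density, which is Gauss's law.
-/

/-- The partial sum of `tent h (x - m * h)` over the nodes `m ≤ k`, in closed form for `0 < h`: it
measures the charge that a particle at `x` deposits at or to the left of node `k`. -/
noncomputable def tentPartialSum (h x : ℝ) (k : ℤ) : ℝ := max 0 (min 1 (k + 1 - x / h)) / h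

theorem max_zero_min_one_add_one_sub (t : ℝ) :
    max 0 (min 1 (t + 1)) - max 0 (min 1 t) = max 0 (1 - |t|) := by
  grind

section Tent

variable {h x : ℝ} {a k : ℤ}

theorem tentPartialSum_sub_one (hh : 0 < h) (x : ℝ) (k : ℤ) :
    tentPartialSum h x k - tentPartialSum h x (k - 1) = tent h (x - k * h) := by
  have habs : |x - k * h| / h = |k - x / h| := by
    rw [← abs_of_pos hh, ← abs_div, abs_of_pos hh, abs_sub_comm, sub_div,
      mul_div_cancel_right₀ _ hh.ne']
  rw [tent, habs, ← max_zero_min_one_add_one_sub, tentPartialSum, tentPartialSum, ← sub_div]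
  push_cast
  ring_nf

theorem tentPartialSum_of_lt_cell (hh : 0 < h) (hax : a * h ≤ x) (hka : k < a) :
    tentPartialSum h x k = 0 := by
  have hk : (k : ℝ) + 1 ≤ a := mod_cast hka
  have hx : (a : ℝ) ≤ x / h := (le_div_iff₀ hh).mpr hax
  rw [tentPartialSum, max_eq_left (min_le_of_right_le (by linarith)), zero_div]

theorem tentPartialSum_of_cell_lt (hh : 0 < h) (hxa : x ≤ (a + 1) * h) (hak : a < k) :
    tentPartialSum h x k = 1 / h := by
  have hk : (a : ℝ) + 1 ≤ k := mod_cast hak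
  have hx : x / h ≤ a + 1 := (div_le_iff₀ hh).mpr hxa
  rw [tentPartialSum, min_eq_left (by linarith), max_eq_right zero_le_one]

theorem tentPartialSum_eq_tent (hh : 0 < h) (hax : a * h ≤ x) :
    tentPartialSum h x a = tent h (x - a * h) := by
  rw [← tentPartialSum_sub_one hh, tentPartialSum_of_lt_cell hh hax (sub_one_lt a), sub_zero]

theorem one_div_sub_tentPartialSum_eq_tent (hh : 0 < h) (hxa : x ≤ (a + 1) * h) :
    1 / h - tentPartialSum h x a = tent h (x - (a + 1) * h) := by
  have hstep := tentPartialSum_sub_one hh x (a + 1)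
  rwa [tentPartialSum_of_cell_lt hh hxa (lt_add_one a), add_sub_cancel_right,
    Int.cast_add, Int.cast_one] at hstep

theorem tent_add_tent_cell (hh : 0 < h) (hax : a * h ≤ x) (hxa : x ≤ (a + 1) * h) :
    tent h (x - a * h) + tent h (x - (a + 1) * h) = 1 / h := by
  rw [← tentPartialSum_eq_tent hh hax, ← one_div_sub_tentPartialSum_eq_tent hh hxa, add_sub_cancel]

theorem tent_eq_zero_of_lt_cell (hh : 0 < h) (hax : a * h ≤ x) (hka : k < a) :
    tent h (x - k * h) = 0 := by
  rw [← tentPartialSum_sub_one hh, tentPartialSum_of_lt_cell hh hax hka,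
    tentPartialSum_of_lt_cell hh hax (by omega), sub_zero]

theorem tent_eq_zero_of_cell_lt (hh : 0 < h) (hxa : x ≤ (a + 1) * h) (hak : a + 1 < k) :
    tent h (x - k * h) = 0 := by
  rw [← tentPartialSum_sub_one hh, tentPartialSum_of_cell_lt hh hxa (by omega),
    tentPartialSum_of_cell_lt hh hxa (by omega), sub_self]

theorem tent_eq_zero_of_outside_cell (hh : 0 < h) (hax : a * h ≤ x) (hxa : x ≤ (a + 1) * h)
    (hk : k < a ∨ a + 1 < k) : tent h (x - k * h) = 0 :=
  hk.elim (tent_eq_zero_of_lt_cell hh hax) (tent_eq_zero_of_cell_lt hh hxa)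

end Tent

section CrossingFlux

variable {h xold xnew : ℝ} {i l k : ℤ}

theorem tentPartialSum_sub_first_cell (hh : 0 < h) (hxold : i * h ≤ xold) (hxnew : l * h ≤ xnew)
    (hil : i < l) :
    tentPartialSum h xold i - tentPartialSum h xnew i = tent h (xold - i * h) := by
  rw [tentPartialSum_eq_tent hh hxold, tentPartialSum_of_lt_cell hh hxnew hil, sub_zero]

theorem tentPartialSum_sub_last_cell (hh : 0 < h) (hxold : xold ≤ (i + 1) * h)
    (hxnew : xnew ≤ (l + 1) * h) (hil : i < l) :
    tentPartialSum h xold l - tentPartialSum h xnew l = tent h (xnew - (l + 1) * h) := by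
  rw [tentPartialSum_of_cell_lt hh hxold hil, one_div_sub_tentPartialSum_eq_tent hh hxnew]

theorem tentPartialSum_sub_of_between (hh : 0 < h) (hxold₁ : i * h ≤ xold)
    (hxold₂ : xold ≤ (i + 1) * h) (hxnew₁ : l * h ≤ xnew) (hik : i < k) (hkl : k < l) :
    tentPartialSum h xold k - tentPartialSum h xnew k =
      tent h (xold - i * h) + tent h (xold - (i + 1) * h) - tent h (xnew - (i + 1) * h) := by
  have hnew : tent h (xnew - (i + 1) * h) = 0 :=
    mod_cast tent_eq_zero_of_lt_cell hh hxnew₁ (show i + 1 < l by omega)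
  rw [tent_add_tent_cell hh hxold₁ hxold₂, hnew, tentPartialSum_of_cell_lt hh hxold₂ hik,
    tentPartialSum_of_lt_cell hh hxnew₁ hkl]

theorem tentPartialSum_sub_of_outside (hh : 0 < h) (hxold₁ : i * h ≤ xold)
    (hxold₂ : xold ≤ (i + 1) * h) (hxnew₁ : l * h ≤ xnew) (hxnew₂ : xnew ≤ (l + 1) * h)
    (hil : i < l) (hk : k < i ∨ l < k) :
    tentPartialSum h xold k - tentPartialSum h xnew k = 0 := by
  obtain hk | hk := hk
  · rw [tentPartialSum_of_lt_cell hh hxold₁ hk,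
      tentPartialSum_of_lt_cell hh hxnew₁ (hk.trans hil), sub_zero]
  · rw [tentPartialSum_of_cell_lt hh hxold₂ (hil.trans hk),
      tentPartialSum_of_cell_lt hh hxnew₂ hk, sub_self]

end CrossingFlux

theorem divh_add_tentPartialSum_sub {h : ℝ} (hh : 0 < h) (c xold xnew : ℝ) (g : ℤ → ℝ)
    (Ex Ey : ℤ × ℤ → ℝ) (p : ℤ × ℤ) :
    divh h (fun q ↦ Ex q + c * (tentPartialSum h xold q.1 - tentPartialSum h xnew q.1) * g q.2)
        Ey p =
      divh h Ex Ey p + c / h * (tent h (xold - p.1 * h) - tent h (xnew - p.1 * h)) * g p.2 := by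
  rw [← tentPartialSum_sub_one hh, ← tentPartialSum_sub_one hh, divh, divh]
  ring

/-- Cell-crossing case of Theorem 3.1: the local electric-field update
(3.6)–(3.11) accompanying a particle move in the `x`-direction across cell
boundaries (from cell `i` to cell `l`, `i < l`) exactly preserves the discrete
Gauss's law at every node. -/
theorem gauss_preserved_cell_crossing
    (h lam w : ℝ) (hh : 0 < h) (hlam : 0 < lam)
    (i l j : ℤ) (hil : i < l) (xold xnew y : ℝ)
    (hxold₁ : (i : ℝ) * h ≤ xold) (hxold₂ : xold < ((i : ℝ) + 1) * h)
    (hxnew₁ : (l : ℝ) * h ≤ xnew) (hxnew₂ : xnew < ((l : ℝ) + 1) * h)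
    (hy₁ : (j : ℝ) * h ≤ y) (hy₂ : y < ((j : ℝ) + 1) * h)
    (nbg : ℤ × ℤ → ℝ) (n0 : ℝ)
    (nold nnew : ℤ × ℤ → ℝ)
    (hnold : ∀ q : ℤ × ℤ,
      nold q = nbg q + w * tent h (xold - q.1 * h) * tent h (y - q.2 * h))
    (hnnew : ∀ q : ℤ × ℤ,
      nnew q = nbg q + w * tent h (xnew - q.1 * h) * tent h (y - q.2 * h))
    (Ex Ey : ℤ × ℤ → ℝ)
    (hGauss : ∀ p : ℤ × ℤ, divh h Ex Ey p = (n0 - nold p) / lam ^ 2)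
    (Exstar : ℤ × ℤ → ℝ)
    (hstar_i : ∀ s : ℤ, s = j ∨ s = j + 1 →
      Exstar (i, s) = Ex (i, s)
        + (h * w / lam ^ 2) * tent h (xold - i * h) * tent h (y - s * h))
    (hstar_mid : ∀ r s : ℤ, s = j ∨ s = j + 1 → i + 1 ≤ r → r ≤ l - 1 →
      Exstar (r, s) = Ex (r, s)
        + (h * w / lam ^ 2)
          * (tent h (xold - i * h) + tent h (xold - (i + 1) * h)
            - tent h (xnew - (i + 1) * h))
          * tent h (y - s * h))
    (hstar_l : ∀ s : ℤ, s = j ∨ s = j + 1 →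
      Exstar (l, s) = Ex (l, s)
        + (h * w / lam ^ 2) * tent h (xnew - (l + 1) * h) * tent h (y - s * h))
    (hother : ∀ p : ℤ × ℤ,
      ¬((p.2 = j ∨ p.2 = j + 1) ∧ (i ≤ p.1 ∧ p.1 ≤ l)) → Exstar p = Ex p) :
    ∀ p : ℤ × ℤ, divh h Exstar Ey p = (n0 - nnew p) / lam ^ 2 := by
  have hflux : Exstar = fun q ↦ Ex q + h * w / lam ^ 2 *
      (tentPartialSum h xold q.1 - tentPartialSum h xnew q.1) * tent h (y - q.2 * h) := by
    ext ⟨k, s⟩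
    by_cases hs : s = j ∨ s = j + 1
    · obtain hk | rfl | ⟨hik, hkl⟩ | rfl :
          (k < i ∨ l < k) ∨ k = i ∨ (i < k ∧ k < l) ∨ k = l := by omega
      · rw [hother _ (by dsimp only; omega),
          tentPartialSum_sub_of_outside hh hxold₁ hxold₂.le hxnew₁ hxnew₂.le hil hk,
          mul_zero, zero_mul, add_zero]
      · rw [hstar_i s hs, tentPartialSum_sub_first_cell hh hxold₁ hxnew₁ hil]
      · rw [hstar_mid k s hs (by omega) (by omega),
          tentPartialSum_sub_of_between hh hxold₁ hxold₂.le hxnew₁ hik hkl]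
      · rw [hstar_l s hs, tentPartialSum_sub_last_cell hh hxold₂.le hxnew₂.le hil]
    · rw [hother _ fun hp ↦ hs hp.1,
        tent_eq_zero_of_outside_cell hh hy₁ hy₂.le (by omega), mul_zero, add_zero]
  intro p
  rw [hflux, divh_add_tentPartialSum_sub hh _ _ _ fun s ↦ tent h (y - s * h), hGauss, hnold,
    hnnew]
  field_simp
  ring
end

section
/- Let h, λ > 0 and w ∈ ℝ, and let S(y) = max(0, 1 − |y|/h)/h be the tent shape function of spacing h. Fix integers i, j and real numbers x_old, x_new, y satisfying i·h ≤ x_old < (i+1)·h, i·h ≤ x_new < (i+1)·h, and j·h ≤ y < (j+1)·h. Let n_bg : ℤ × ℤ → ℝ and n0 ∈ ℝ, and define the densities n_old(k,r) = n_bg(k,r) + w·S(x_old − k·h)·S(y − r·h) and n_new(k,r) = n_bg(k,r) + w·S(x_new − k·h)·S(y − r·h). Suppose (Ex, Ey) satisfies the discrete Gauss's law with density n_old, background n0, and parameter λ. Define Ex* by Ex*(i,s) = Ex(i,s) − (h·w/λ²)·[S(x_new − i·h) − S(x_old − i·h)]·S(y − s·h) for s ∈ {j, j+1}, and Ex*(k,r)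 = Ex(k,r) for all other pairs (k,r). Then (Ex*, Ey) satisfies the discrete Gauss's law with density n_new, background n0, and parameter λ at every node of ℤ × ℤ. -/
/-!
A charge-conserving field update preserves Gauss's law: if the densities before and after the step
satisfy the discrete continuity equation with a flux `J`, then adding `J / λ²` to the field changes
its divergence by exactly what the new density requires. For a move inside one cell, the tent
weights at the two ends of the cell sum to `1 / h` and all others vanish, so whatever leaves column
`i` arrives in column `i + 1`, and the flux lives on the edges between these two columns.
-/

open Set

theorem divh_add (h : ℝ) (Ex Ey Fx Fy : ℤ × ℤ → ℝ) (p : ℤ × ℤ) :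
    divh h (Ex + Fx) (Ey + Fy) p = divh h Ex Ey p + divh h Fx Fy p := by
  simp only [divh, Pi.add_apply]
  ring

theorem divh_smul (h c : ℝ) (Ex Ey : ℤ × ℤ → ℝ) (p : ℤ × ℤ) :
    divh h (c • Ex) (c • Ey) p = c * divh h Ex Ey p := by
  simp only [divh, Pi.smul_apply, smul_eq_mul]
  ring

theorem gauss_of_continuity {h ε n₀ n n' : ℝ} {Ex Ey Jx Jy : ℤ × ℤ → ℝ} {p : ℤ × ℤ}
    (gauss : divh h Ex Ey p = (n₀ - n) / ε) (continuity : divh h Jx Jy p = n - n') :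
    divh h (Ex + ε⁻¹ • Jx) (Ey + ε⁻¹ • Jy) p = (n₀ - n') / ε := by
  rw [divh_add, divh_smul, gauss, continuity]
  ring

theorem tent_eq_zero_of_le_abs {h y : ℝ} (hh : 0 < h) (hy : h ≤ |y|) : tent h y = 0 := by
  have : 1 ≤ |y| / h := (one_le_div hh).mpr hy
  rw [tent, max_eq_left (by linarith), zero_div]

theorem tent_eq_of_abs_le {h y : ℝ} (hy : |y| ≤ h) : tent h y = (1 - |y| / h) / h := by
  have : |y| / h ≤ 1 := div_le_one_of_le₀ hy ((abs_nonneg y).trans hy)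
  rw [tent, max_eq_right (by linarith)]

theorem tent_add_tent_sub_self {h t : ℝ} (hh : 0 < h) (ht : t ∈ Icc 0 h) :
    tent h t + tent h (t - h) = 1 / h := by
  have abs_left : |t| = t := abs_of_nonneg ht.1
  have abs_right : |t - h| = h - t := by rw [abs_sub_comm, abs_of_nonneg (sub_nonneg.mpr ht.2)]
  rw [tent_eq_of_abs_le (by linarith [ht.2]), tent_eq_of_abs_le (by linarith [ht.1]),
    abs_left, abs_right]
  field_simp
  ring

section Cell

variable {h x : ℝ} {i : ℤ}

theorem tent_sub_node_eq_zero (hh : 0 < h) (hx : x ∈ Icc (i * h) ((i + 1) * h)) {k : ℤ}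
    (hk : k ≠ i) (hk' : k ≠ i + 1) : tent h (x - k * h) = 0 := by
  apply tent_eq_zero_of_le_abs hh
  rcases lt_or_gt_of_ne hk with left | right
  · have : (k : ℝ) + 1 ≤ i := by exact_mod_cast left
    exact le_abs.mpr (.inl (by nlinarith [hx.1]))
  · have : (i : ℝ) + 2 ≤ k := by exact_mod_cast (by omega : i + 2 ≤ k)
    exact le_abs.mpr (.inr (by nlinarith [hx.2]))

theorem tent_sub_node_add_tent_sub_next_node (hh : 0 < h)
    (hx : x ∈ Icc (i * h) ((i + 1) * h)) :
    tent h (x - i * h) + tent h (x - (i + 1) * h) = 1 / h := by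
  have offset_mem : x - i * h ∈ Icc 0 h := ⟨by linarith [hx.1], by linarith [hx.2]⟩
  convert tent_add_tent_sub_self hh offset_mem using 3
  ring

end Cell

section Move

variable {h xold xnew : ℝ} {i : ℤ}

theorem tent_sub_tent_eq_ite_sub_ite (hh : 0 < h) (hxold : xold ∈ Icc (i * h) ((i + 1) * h))
    (hxnew : xnew ∈ Icc (i * h) ((i + 1) * h)) (k : ℤ) :
    tent h (xnew - k * h) - tent h (xold - k * h) =
      (if k = i then tent h (xnew - i * h) - tent h (xold - i * h) else 0) -
        (if k - 1 = i then tent h (xnew - i * h) - tent h (xold - i * h) else 0) := by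
  by_cases hk : k = i
  · simp [hk]
  by_cases hk' : k = i + 1
  · have sum_old := tent_sub_node_add_tent_sub_next_node hh hxold
    have sum_new := tent_sub_node_add_tent_sub_next_node hh hxnew
    rw [if_neg hk, if_pos (by omega), hk']
    push_cast
    linarith
  · rw [if_neg hk, if_neg (by omega), tent_sub_node_eq_zero hh hxold hk hk',
      tent_sub_node_eq_zero hh hxnew hk hk']

/-- The `x`-component of the time-integrated particle flux produced when a particle of weight `w`
at height `y` moves from `xold` to `xnew` inside the `i`-th cell, counted positive to the right.
It is carried by the edges `((i + 1/2) h, r h)`, which have index `(i, r)`. -/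
noncomputable def moveFlux (h w : ℝ) (i : ℤ) (xold xnew y : ℝ) (p : ℤ × ℤ) : ℝ :=
  if p.1 = i then
    -(h * w * (tent h (xnew - i * h) - tent h (xold - i * h)) * tent h (y - p.2 * h))
  else 0

theorem divh_moveFlux (hh : 0 < h) (hxold : xold ∈ Icc (i * h) ((i + 1) * h))
    (hxnew : xnew ∈ Icc (i * h) ((i + 1) * h)) (w y : ℝ) (p : ℤ × ℤ) :
    divh h (moveFlux h w i xold xnew y) 0 p =
      w * tent h (xold - p.1 * h) * tent h (y - p.2 * h) -
        w * tent h (xnew - p.1 * h) * tent h (y - p.2 * h) := by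
  have move := tent_sub_tent_eq_ite_sub_ite hh hxold hxnew p.1
  calc divh h (moveFlux h w i xold xnew y) 0 p
      = -w * tent h (y - p.2 * h) *
          ((if p.1 = i then tent h (xnew - i * h) - tent h (xold - i * h) else 0) -
            (if p.1 - 1 = i then tent h (xnew - i * h) - tent h (xold - i * h) else 0)) := by
        simp only [divh, moveFlux, Pi.zero_apply]
        split_ifs <;> field_simp <;> ring
    _ = w * tent h (xold - p.1 * h) * tent h (y - p.2 * h) -
          w * tent h (xnew - p.1 * h) * tent h (y - p.2 * h) := by
        rw [← move]
        ring

end Move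

/-- Within-cell case of Theorem 3.1: the local electric-field update
accompanying a particle move in the `x`-direction that stays inside one grid
cell exactly preserves the discrete Gauss's law at every node. -/
theorem gauss_preserved_within_cell
    (h lam w : ℝ) (hh : 0 < h) (hlam : 0 < lam)
    (i j : ℤ) (xold xnew y : ℝ)
    (hxold₁ : (i : ℝ) * h ≤ xold) (hxold₂ : xold < ((i : ℝ) + 1) * h)
    (hxnew₁ : (i : ℝ) * h ≤ xnew) (hxnew₂ : xnew < ((i : ℝ) + 1) * h)
    (hy₁ : (j : ℝ) * h ≤ y) (hy₂ : y < ((j : ℝ) + 1) * h)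
    (nbg : ℤ × ℤ → ℝ) (n0 : ℝ)
    (nold nnew : ℤ × ℤ → ℝ)
    (hnold : ∀ q : ℤ × ℤ,
      nold q = nbg q + w * tent h (xold - q.1 * h) * tent h (y - q.2 * h))
    (hnnew : ∀ q : ℤ × ℤ,
      nnew q = nbg q + w * tent h (xnew - q.1 * h) * tent h (y - q.2 * h))
    (Ex Ey : ℤ × ℤ → ℝ)
    (hGauss : ∀ p : ℤ × ℤ, divh h Ex Ey p = (n0 - nold p) / lam ^ 2)
    (Exstar : ℤ × ℤ → ℝ)
    (hstar : ∀ s : ℤ, s = j ∨ s = j + 1 →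
      Exstar (i, s) = Ex (i, s)
        - (h * w / lam ^ 2) * (tent h (xnew - i * h) - tent h (xold - i * h))
          * tent h (y - s * h))
    (hother : ∀ p : ℤ × ℤ, ¬(p.1 = i ∧ (p.2 = j ∨ p.2 = j + 1)) →
      Exstar p = Ex p) :
    ∀ p : ℤ × ℤ, divh h Exstar Ey p = (n0 - nnew p) / lam ^ 2 := by
  have hy : y ∈ Icc (j * h) ((j + 1) * h) := ⟨hy₁, hy₂.le⟩
  have update : Exstar = Ex + (lam ^ 2)⁻¹ • moveFlux h w i xold xnew y := by
    funext ⟨k, s⟩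
    simp only [Pi.add_apply, Pi.smul_apply, smul_eq_mul, moveFlux]
    split_ifs with hk
    · subst hk
      by_cases hs : s = j ∨ s = j + 1
      · rw [hstar s hs]
        ring
      · obtain ⟨hsj, hsj'⟩ := not_or.mp hs
        rw [hother (k, s) (fun mem => hs mem.2), tent_sub_node_eq_zero hh hy hsj hsj']
        ring
    · rw [hother (k, s) (fun mem => hk mem.1), mul_zero, add_zero]
  intro p
  have continuity : divh h (moveFlux h w i xold xnew y) 0 p = nold p - nnew p := by
    rw [divh_moveFlux hh ⟨hxold₁, hxold₂.le⟩ ⟨hxnew₁, hxnew₂.le⟩, hnold, hnnew]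
    ring
  simpa only [update, smul_zero, add_zero] using gauss_of_continuity (hGauss p) continuity
end

section
/- Let N be a positive integer, h > 0, ε > 0, Δt > 0. Let Eⁿ = (Exⁿ, Eyⁿ), Eⁿ⁺¹ = (Exⁿ⁺¹, Eyⁿ⁺¹), J = (Jx, Jy), and Q = (Qx, Qy) be discrete vector fields on the periodic N × N grid (functions (ZMod N) × (ZMod N) → ℝ for each component), and let ρⁿ, ρⁿ⁺¹ : (ZMod N) × (ZMod N) → ℝ. Assume: (i) the discrete Ampère relation ε·(Eⁿ⁺¹ − Eⁿ)/Δt + J = Q holds componentwise at every edge; (ii) (div_h Q)(i,j) = 0 for all (i,j); and (iii) the Gauss's law at step n: (div_h Eⁿ)(i,j) = ρⁿ(i,j)/ε for all (i,j). Then the following are equivalent: (a) the discrete charge continuity equation (ρⁿ⁺¹(i,j) − ρⁿ(i,j))/Δt + (div_h J)(i,j) = 0 holds for all (i,j); (b) the Gauss's law at step n+1: (div_h Eⁿ⁺¹)(i,j) = ρⁿ⁺¹(i,j)/ε holds for all (i,j). -/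
/-- Discrete divergence of a staggered vector field `(Fx, Fy)` on the periodic
`N × N` grid of spacing `h`, at node `(k, r)`. -/
noncomputable def divhP (N : ℕ) (h : ℝ) (Fx Fy : ZMod N × ZMod N → ℝ)
    (p : ZMod N × ZMod N) : ℝ :=
  (Fx p - Fx (p.1 - 1, p.2)) / h + (Fy p - Fy (p.1, p.2 - 1)) / h

/-!
Applying the linear divergence to Ampère's equation with a divergence-free source shows that the
continuity residual `(ρⁿ⁺¹ - ρⁿ) / Δt + div J` is the time difference quotient of the Gauss residual
`ρ - ε div E`. Once the Gauss residual vanishes at step `n`, it vanishes at step `n + 1` exactly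
when the continuity residual does.
-/

section LinearDivergence

variable {K V W : Type*} [AddCommGroup V] [AddCommGroup W]

theorem continuity_residual_eq_smul_gauss_residual_sub [Ring K] [Module K V] [Module K W]
    (div : V →ₗ[K] W) {τ ε : K} {E₀ E₁ J Q : V} (ρ₀ ρ₁ : W)
    (ampere : τ • ε • (E₁ - E₀) + J = Q) (div_source : div Q = 0) :
    τ • (ρ₁ - ρ₀) + div J = τ • ((ρ₁ - ε • div E₁) - (ρ₀ - ε • div E₀)) := by
  have div_current : div J = -(τ • ε • (div E₁ - div E₀)) := by
    rw [← map_sub, ← map_smul, ← map_smul, eq_neg_iff_add_eq_zero, add_comm, ← map_add, ampere,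
      div_source]
  rw [div_current]
  simp only [smul_sub]
  abel

variable [DivisionRing K] [Module K V] [Module K W]

theorem gauss_residual_eq_zero_iff {ε : K} (hε : ε ≠ 0) {divE ρ : W} :
    ρ - ε • divE = 0 ↔ divE = ε⁻¹ • ρ := by
  rw [sub_eq_zero, eq_comm, eq_inv_smul_iff₀ hε]

theorem ampere_continuity_iff_gauss_general (div : V →ₗ[K] W) {ε dt : K} (hε : ε ≠ 0)
    (hdt : dt ≠ 0) {E₀ E₁ J Q : V} {ρ₀ ρ₁ : W}
    (ampere : dt⁻¹ • ε • (E₁ - E₀) + J = Q) (div_source : div Q = 0)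
    (gauss₀ : div E₀ = ε⁻¹ • ρ₀) :
    dt⁻¹ • (ρ₁ - ρ₀) + div J = 0 ↔ div E₁ = ε⁻¹ • ρ₁ := by
  rw [continuity_residual_eq_smul_gauss_residual_sub div ρ₀ ρ₁ ampere div_source,
    (gauss_residual_eq_zero_iff hε).mpr gauss₀, sub_zero,
    smul_eq_zero_iff_right (inv_ne_zero hdt), gauss_residual_eq_zero_iff hε]

end LinearDivergence

/-- The discrete divergence `divhP` as a linear map from staggered vector fields, encoded as pairs
of component functions, to functions on the nodes. -/
noncomputable def divhLinearMap (N : ℕ) (h : ℝ) :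
    (ZMod N × ZMod N → ℝ) × (ZMod N × ZMod N → ℝ) →ₗ[ℝ] (ZMod N × ZMod N → ℝ) where
  toFun F := divhP N h F.1 F.2
  map_add' F G := by
    ext p
    simp only [divhP, Prod.fst_add, Prod.snd_add, Pi.add_apply]
    ring
  map_smul' c F := by
    ext p
    simp only [divhP, Prod.smul_fst, Prod.smul_snd, Pi.smul_apply, smul_eq_mul, RingHom.id_apply]
    ring

/-- Given the time-discretized Ampère relation with a divergence-free source `Q`
and the Gauss's law at step `n`, the discrete charge continuity equation is
equivalent to the Gauss's law at step `n+1`. -/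
theorem ampere_continuity_iff_gauss
    (N : ℕ) (hN : 0 < N) (h : ℝ) (hh : 0 < h) (eps : ℝ) (heps : 0 < eps)
    (dt : ℝ) (hdt : 0 < dt)
    (Exn Eyn Exn1 Eyn1 Jx Jy Qx Qy : ZMod N × ZMod N → ℝ)
    (ρn ρn1 : ZMod N × ZMod N → ℝ)
    (hAmpx : ∀ p : ZMod N × ZMod N, eps * (Exn1 p - Exn p) / dt + Jx p = Qx p)
    (hAmpy : ∀ p : ZMod N × ZMod N, eps * (Eyn1 p - Eyn p) / dt + Jy p = Qy p)
    (hQ : ∀ p : ZMod N × ZMod N, divhP N h Qx Qy p = 0)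
    (hGaussN : ∀ p : ZMod N × ZMod N, divhP N h Exn Eyn p = ρn p / eps) :
    (∀ p : ZMod N × ZMod N, (ρn1 p - ρn p) / dt + divhP N h Jx Jy p = 0) ↔
    (∀ p : ZMod N × ZMod N, divhP N h Exn1 Eyn1 p = ρn1 p / eps) := by
  have ampere : dt⁻¹ • eps • ((Exn1, Eyn1) - (Exn, Eyn)) + (Jx, Jy) = (Qx, Qy) := by
    simpa [Prod.ext_iff, funext_iff, div_eq_inv_mul] using And.intro hAmpx hAmpy
  simpa [divhLinearMap, funext_iff, div_eq_inv_mul] using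
    ampere_continuity_iff_gauss_general (ρ₁ := ρn1) (divhLinearMap N h) heps.ne' hdt.ne' ampere
      (funext hQ) (funext fun p => (hGaussN p).trans (div_eq_inv_mul _ _))
end
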